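/- For B ≥ 3, define h(η₁,…,η₈;B) = B^{−1}·max{ |η₂η₃η₄η₅η₆η₇η₈|, η₁²η₂²η₃³η₄²η₆, |η₁η₂η₃²η₄²η₅²η₆²η₇|, η₃η₄²η₅⁴η₆³η₇², |η₁^{−1}(η₂η₇η₈² + η₄η₅³η₆²η₇²η₈)| }, let R'(B) = {(η₁,…,η₈) : η₁,…,η₅ ∈ [1,∞), η₁²η₂²η₃³η₄² ≤ B, η₁³η₂³η₃⁴η₄²η₅^{−2} ≥ B, η₆ ∈ [0,∞), η₇ ∈ ℝ, η₈ ∈ ℝ, h(η;B) ≤ 1}, and V₀'(B) = ∫_{R'(B)} η₁^{−1} dη₁⋯dη₈. Let P' = {(t₁,…,t₅) ∈ ℝ_{≥0}⁵ : 2t₁+2t₂+3t₃+2t₄ ≤ 1 and 3t₁+3t₂+4t₃+2t₄−2t₅ ≥ 1}, and let ω_∞ = ∫ 1/(x₁|x₂|) dx₀dx₁dx₂ over {(x₀,x₁,x₂) ∈ ℝ³ : 0 ≤ x₁ ≤ 1, |x₀| ≤ 1, |x₂| ≤ 1, x₂² ≤ x₁, |x₀²x₁ + x₀x₂²| ≤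 x₁|x₂|}. Then V₀'(B) = vol(P')·ω_∞·B·(log B)⁵ for all B ≥ 3. -/

import Mathlib

/-!
The region `R'(B)` is fibred over the conditions on `(η₁, …, η₅)`. For fixed `(η₁, …, η₅)` the
coordinates `x₀ = η₂η₃η₄η₅η₆η₇η₈ / B`, `x₁ = η₁²η₂²η₃³η₄²η₆ / B`,
`x₂ = η₁η₂η₃²η₄²η₅²η₆²η₇ / B` carry the height condition to the domain of `ω_∞`, and their Jacobian
in `(η₆, η₇, η₈)` is `(η₂η₃η₄η₅ / B) x₁x₂`, so the fibre has volume
`B ω_∞ / (η₂η₃η₄η₅)`. The remaining density `1 / (η₁⋯η₅)` becomes the constant `(log B)⁵` under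
`ηᵢ = B ^ tᵢ`, which carries the base to `P'`.

Neither `ω_∞` nor the volumes need to be known finite: the computation takes place in `[0, ∞]`,
where `ENNReal.toReal` is multiplicative without any finiteness assumption.
-/

open MeasureTheory

/-- The height function `h(η₁,…,η₈; B)` (zero-indexed), obtained from the anticanonical height
after eliminating `η₉` via the torsor equation. -/
noncomputable def hFun (η : Fin 8 → ℝ) (B : ℝ) : ℝ :=
  B⁻¹ * max (|η 1 * η 2 * η 3 * η 4 * η 5 * η 6 * η 7|)
    (max (η 0 ^ 2 * η 1 ^ 2 * η 2 ^ 3 * η 3 ^ 2 * η 5)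
      (max (|η 0 * η 1 * η 2 ^ 2 * η 3 ^ 2 * η 4 ^ 2 * η 5 ^ 2 * η 6|)
        (max (η 2 * η 3 ^ 2 * η 4 ^ 4 * η 5 ^ 3 * η 6 ^ 2)
          (|(η 0)⁻¹ * (η 1 * η 6 * η 7 ^ 2 + η 3 * η 4 ^ 3 * η 5 ^ 2 * η 6 ^ 2 * η 7)|))))

/-- The modified region `R'(B)`: `η₁,…,η₅ ≥ 1`, `η₁²η₂²η₃³η₄² ≤ B`,
`η₁³η₂³η₃⁴η₄²η₅⁻² ≥ B`, `η₆ ≥ 0`, `η₇, η₈ ∈ ℝ` and `h(η; B) ≤ 1`. -/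
def RSet' (B : ℝ) : Set (Fin 8 → ℝ) :=
  {η | (∀ i : Fin 8, i.val ≤ 4 → 1 ≤ η i) ∧
    η 0 ^ 2 * η 1 ^ 2 * η 2 ^ 3 * η 3 ^ 2 ≤ B ∧
    B ≤ η 0 ^ 3 * η 1 ^ 3 * η 2 ^ 4 * η 3 ^ 2 * (η 4 ^ 2)⁻¹ ∧
    0 ≤ η 5 ∧ hFun η B ≤ 1}

/-- `V₀'(B) = ∫_{R'(B)} η₁⁻¹ dη₁⋯dη₈`. -/
noncomputable def V0' (B : ℝ) : ℝ := ∫ η in RSet' B, (η 0)⁻¹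

/-- The polytope `P'` whose volume is the constant `α(S̃)`. -/
def Pprime : Set (Fin 5 → ℝ) :=
  {t | (∀ i : Fin 5, 0 ≤ t i) ∧
    2 * t 0 + 2 * t 1 + 3 * t 2 + 2 * t 3 ≤ 1 ∧
    1 ≤ 3 * t 0 + 3 * t 1 + 4 * t 2 + 2 * t 3 - 2 * t 4}

/-- The domain of integration of the archimedean density `ω_∞`. -/
def omegaSet : Set (Fin 3 → ℝ) :=
  {x | 0 ≤ x 1 ∧ x 1 ≤ 1 ∧ |x 0| ≤ 1 ∧ |x 2| ≤ 1 ∧ x 2 ^ 2 ≤ x 1 ∧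
    |x 0 ^ 2 * x 1 + x 0 * x 2 ^ 2| ≤ x 1 * |x 2|}

/-- The archimedean density `ω_∞ = ∫ 1/(x₁|x₂|) dx₀ dx₁ dx₂`. -/
noncomputable def omegaInf : ℝ := ∫ x in omegaSet, (x 1 * |x 2|)⁻¹

section FinAppend

variable (α : Type*) [MeasureSpace α] [SigmaFinite (volume : Measure α)] (m n : ℕ)

lemma measurePreserving_finAppend :
    MeasurePreserving (fun p : (Fin m → α) × (Fin n → α) => Fin.append p.1 p.2) := by
  have hmeas : Measurable (fun p : (Fin m → α) × (Fin n → α) => Fin.append p.1 p.2) := by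
    refine measurable_pi_iff.2 (Fin.addCases (fun i => ?_) fun i => ?_)
    · simp only [Fin.append_left]
      fun_prop
    · simp only [Fin.append_right]
      fun_prop
  refine ⟨hmeas, (Measure.pi_eq fun s hs => ?_).symm⟩
  have hbox : (fun p : (Fin m → α) × (Fin n → α) => Fin.append p.1 p.2) ⁻¹' Set.univ.pi s =
      (Set.univ.pi fun i => s (Fin.castAdd n i)) ×ˢ Set.univ.pi fun i => s (Fin.natAdd m i) := by
    ext p
    simp [Fin.forall_fin_add]
  rw [Measure.map_apply hmeas (.univ_pi hs), hbox, Measure.volume_eq_prod, Measure.prod_prod,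
    volume_pi_pi, volume_pi_pi, Fin.prod_univ_add]

variable {α m n}

lemma setLIntegral_comp_castAdd {s : Set (Fin (m + n) → α)} (hs : MeasurableSet s)
    {f : (Fin m → α) → ENNReal} (hf : Measurable f) :
    ∫⁻ x in s, f (fun i => x (Fin.castAdd n i)) =
      ∫⁻ u, f u * volume {v : Fin n → α | Fin.append u v ∈ s} := by
  have happ := measurePreserving_finAppend α m n
  have hF : Measurable (s.indicator fun x => f fun i => x (Fin.castAdd n i)) :=
    (hf.comp (by fun_prop)).indicator hs
  have hFapp : Measurable fun p : (Fin m → α) × (Fin n → α) =>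
      s.indicator (fun x => f fun i => x (Fin.castAdd n i)) (Fin.append p.1 p.2) :=
    hF.comp happ.measurable
  rw [← lintegral_indicator hs, ← happ.lintegral_comp hF, Measure.volume_eq_prod,
    lintegral_prod _ hFapp.aemeasurable]
  refine lintegral_congr fun u => ?_
  have hfibre : MeasurableSet {v : Fin n → α | Fin.append u v ∈ s} :=
    (happ.measurable.comp measurable_prodMk_left) hs
  rw [← setLIntegral_const, ← lintegral_indicator hfibre]
  refine lintegral_congr fun v => ?_
  simp only [Set.indicator, Set.mem_ofPred_eq, Fin.append_left]

end FinAppend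

section Coordinatewise

variable {ι : Type*} [Fintype ι]

lemma lintegral_image_piMap {g g' : ι → ℝ → ℝ} (hg : ∀ i x, HasDerivAt (g i) (g' i x) x)
    (hinj : ∀ i, Function.Injective (g i)) {s : Set (ι → ℝ)} (hs : MeasurableSet s)
    (f : (ι → ℝ) → ENNReal) :
    ∫⁻ x in Pi.map g '' s, f x =
      ∫⁻ t in s, ENNReal.ofReal (∏ i, |g' i (t i)|) * f (Pi.map g t) := by
  have hderiv : ∀ t, HasFDerivAt (Pi.map g) (ContinuousLinearMap.pi fun i =>
      (ContinuousLinearMap.toSpanSingleton ℝ (g' i (t i))).comp (.proj i)) t := fun t =>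
    hasFDerivAt_pi.2 fun i =>
      HasFDerivAt.comp t (hg i (t i)).hasFDerivAt (hasFDerivAt_apply (F' := fun _ : ι => ℝ) i t)
  rw [lintegral_image_eq_lintegral_abs_det_fderiv_mul volume hs
    (fun t _ => (hderiv t).hasFDerivWithinAt) (Function.Injective.piMap hinj).injOn]
  simp only [ContinuousLinearMap.det_pi, ContinuousLinearMap.det_toSpanSingleton, Finset.abs_prod]

lemma setLIntegral_inv_prod_eq_volume_exp_preimage {L : ℝ} (hL : L ≠ 0) {s : Set (ι → ℝ)}
    (hs : MeasurableSet s) (hpos : ∀ x ∈ s, ∀ i, 0 < x i) :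
    ∫⁻ x in s, ENNReal.ofReal (∏ i, x i)⁻¹ =
      ENNReal.ofReal |L| ^ Fintype.card ι *
        volume {t : ι → ℝ | (fun i => Real.exp (L * t i)) ∈ s} := by
  have hderiv : ∀ x, HasDerivAt (fun x => Real.exp (L * x)) (L * Real.exp (L * x)) x := fun x => by
    simpa only [id_eq, mul_one, mul_comm] using ((hasDerivAt_id x).const_mul L).exp
  have hinj : Function.Injective fun x => Real.exp (L * x) := fun x y h =>
    mul_left_cancel₀ hL (Real.exp_injective h)
  set e : (ι → ℝ) → ι → ℝ := Pi.map fun _ x => Real.exp (L * x) with he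
  have himage : e '' (e ⁻¹' s) = s :=
    Set.image_preimage_eq_of_subset fun x hx => ⟨fun i => Real.log (x i) / L, funext fun i => by
      simp only [he, Pi.map_apply, mul_div_cancel₀ _ hL, Real.exp_log (hpos x hx i)]⟩
  have hdensity : ∀ t, ENNReal.ofReal (∏ i, |L * Real.exp (L * t i)|) *
      ENNReal.ofReal (∏ i, e t i)⁻¹ = ENNReal.ofReal |L| ^ Fintype.card ι := fun t => by
    have hprod : ∏ i, Real.exp (L * t i) ≠ 0 :=
      Finset.prod_ne_zero_iff.2 fun i _ => Real.exp_ne_zero _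
    rw [← ENNReal.ofReal_mul (by positivity), ← ENNReal.ofReal_pow (abs_nonneg L)]
    simp [he, abs_mul, Finset.prod_mul_distrib, hprod]
  have hmeas : MeasurableSet (e ⁻¹' s) :=
    measurableSet_preimage
      (measurable_pi_iff.2 fun i => by simp only [he, Pi.map_apply]; fun_prop) hs
  rw [← himage, lintegral_image_piMap (fun _ => hderiv) (fun _ => hinj) hmeas, himage]
  simp only [← he, hdensity, setLIntegral_const]
  rfl

end Coordinatewise

section TriangularSubstitution

/-- The monomial map `(p, q, r) ↦ (a p q r, b p, c p² q)`. For suitable `a`, `b`, `c` it expresses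
the coordinates `(x₀, x₁, x₂)` of the archimedean density in terms of `(η₆, η₇, η₈)`. -/
def triangularMap (a b c : ℝ) (v : Fin 3 → ℝ) : Fin 3 → ℝ :=
  ![a * v 0 * v 1 * v 2, b * v 0, c * v 0 ^ 2 * v 1]

variable {a b c : ℝ}

lemma measurable_triangularMap : Measurable (triangularMap a b c) := by
  refine measurable_pi_iff.2 fun i => ?_
  fin_cases i <;> simp only [triangularMap] <;> fun_prop

/-- The Jacobian matrix of `triangularMap a b c`. -/
def triangularJacobian (a b c : ℝ) (v : Fin 3 → ℝ) : Matrix (Fin 3) (Fin 3) ℝ :=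
  !![a * v 1 * v 2, a * v 0 * v 2, a * v 0 * v 1;
    b, 0, 0;
    2 * c * v 0 * v 1, c * v 0 ^ 2, 0]

lemma hasFDerivAt_triangularMap (v : Fin 3 → ℝ) :
    HasFDerivAt (triangularMap a b c)
      (LinearMap.toContinuousLinearMap (Matrix.toLin' (triangularJacobian a b c v))) v := by
  have hcoord : ∀ i : Fin 3, HasFDerivAt (fun w : Fin 3 → ℝ => w i)
      (ContinuousLinearMap.proj (R := ℝ) (φ := fun _ : Fin 3 => ℝ) i) v :=
    fun i => hasFDerivAt_apply i v
  have row_apply (i : Fin 3) (w : Fin 3 → ℝ) :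
      ((ContinuousLinearMap.proj i).comp (LinearMap.toContinuousLinearMap
        (Matrix.toLin' (triangularJacobian a b c v)))) w =
      ∑ j, triangularJacobian a b c v i j * w j := rfl
  refine hasFDerivAt_pi'.2 fun i => ?_
  fin_cases i
  · refine ((((hcoord 0).const_mul a).mul (hcoord 1)).mul (hcoord 2)).congr_fderiv ?_
    ext w
    refine Eq.trans ?_ (row_apply 0 w).symm
    simp only [Fin.sum_univ_three, triangularJacobian, Matrix.of_apply, Matrix.cons_val,
      Pi.mul_apply, ContinuousLinearMap.proj_apply, add_apply, smul_apply, smul_eq_mul]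
    ring
  · refine ((hcoord 0).const_mul b).congr_fderiv ?_
    ext w
    refine Eq.trans ?_ (row_apply 1 w).symm
    simp [Fin.sum_univ_three, triangularJacobian]
  · refine ((((hcoord 0).pow 2).const_mul c).mul (hcoord 1)).congr_fderiv ?_
    ext w
    refine Eq.trans ?_ (row_apply 2 w).symm
    simp only [Fin.sum_univ_three, triangularJacobian, Matrix.of_apply, Matrix.cons_val,
      ContinuousLinearMap.proj_apply, add_apply, smul_apply, smul_eq_mul]
    ring

lemma det_triangularJacobian (v : Fin 3 → ℝ) :
    (triangularJacobian a b c v).det =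
      a * (triangularMap a b c v 1 * triangularMap a b c v 2) := by
  simp only [triangularJacobian, triangularMap, Matrix.det_fin_three, Matrix.of_apply,
    Matrix.cons_val]
  ring

lemma bijOn_triangularMap (ha : a ≠ 0) (hb : b ≠ 0) (hc : c ≠ 0) :
    Set.BijOn (triangularMap a b c) {v | v 0 ≠ 0 ∧ v 1 ≠ 0} {x | x 1 ≠ 0 ∧ x 2 ≠ 0} := by
  refine ⟨fun v ⟨hp, hq⟩ => ?_, fun v ⟨_, _⟩ w ⟨_, _⟩ h => ?_, fun x ⟨hy, hz⟩ => ?_⟩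
  · simp [triangularMap, *]
  · have h0 : v 0 = w 0 := mul_left_cancel₀ hb (congrFun h 1)
    have h1 : v 1 = w 1 := by
      have h2 : c * v 0 ^ 2 * v 1 = c * w 0 ^ 2 * w 1 := congrFun h 2
      rw [h0] at h2
      exact mul_left_cancel₀ (by positivity) h2
    have h2 : v 2 = w 2 := by
      have h2 : a * v 0 * v 1 * v 2 = a * w 0 * w 1 * w 2 := congrFun h 0
      rw [h0, h1] at h2
      exact mul_left_cancel₀ (by positivity) h2
    ext i
    fin_cases i <;> assumption
  · refine ⟨![x 1 / b, x 2 * b ^ 2 / (c * x 1 ^ 2), x 0 * c * x 1 / (a * b * x 2)],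
      ⟨by simp [*], by simp [*]⟩, ?_⟩
    ext i
    fin_cases i <;> simp [triangularMap] <;> field_simp

lemma ae_apply_ne_zero_and_apply_ne_zero {ι : Type*} [Fintype ι] (i j : ι) :
    ∀ᵐ x : ι → ℝ, x i ≠ 0 ∧ x j ≠ 0 :=
  (Measure.ae_eval_ne _ i 0).and (Measure.ae_eval_ne _ j 0)

lemma setLIntegral_inv_abs_eq_volume_triangularMap_preimage (ha : a ≠ 0) (hb : b ≠ 0) (hc : c ≠ 0)
    {s : Set (Fin 3 → ℝ)} (hs : MeasurableSet s) :
    ∫⁻ x in s, ENNReal.ofReal |x 1 * x 2|⁻¹ =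
      ENNReal.ofReal |a| * volume (triangularMap a b c ⁻¹' s) := by
  set U : Set (Fin 3 → ℝ) := {v | v 0 ≠ 0 ∧ v 1 ≠ 0}
  set V : Set (Fin 3 → ℝ) := {x | x 1 ≠ 0 ∧ x 2 ≠ 0}
  have hbij := bijOn_triangularMap ha hb hc
  have hUmeas : MeasurableSet U := by measurability
  have himage : triangularMap a b c '' (U ∩ triangularMap a b c ⁻¹' s) = V ∩ s := by
    rw [Set.image_inter_preimage, hbij.image_eq]
  have hUs : (U ∩ triangularMap a b c ⁻¹' s : Set _) =ᵐ[volume] triangularMap a b c ⁻¹' s :=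
    Set.inter_comm _ _ ▸ inter_ae_eq_left_of_ae_eq_univ
      (Filter.eventuallyEq_univ.2 (ae_apply_ne_zero_and_apply_ne_zero 0 1))
  have hVs : (V ∩ s : Set _) =ᵐ[volume] s :=
    Set.inter_comm _ _ ▸ inter_ae_eq_left_of_ae_eq_univ
      (Filter.eventuallyEq_univ.2 (ae_apply_ne_zero_and_apply_ne_zero 1 2))
  have hmeas : MeasurableSet (U ∩ triangularMap a b c ⁻¹' s) :=
    hUmeas.inter (measurable_triangularMap hs)
  rw [← setLIntegral_congr hVs, ← himage,
    lintegral_image_eq_lintegral_abs_det_fderiv_mul volume hmeas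
    (fun v _ => (hasFDerivAt_triangularMap v).hasFDerivWithinAt)
    (hbij.injOn.mono Set.inter_subset_left), ← measure_congr hUs, ← setLIntegral_const]
  refine setLIntegral_congr_fun hmeas fun v hv => ?_
  have hne : triangularMap a b c v 1 * triangularMap a b c v 2 ≠ 0 :=
    mul_ne_zero (hbij.mapsTo hv.1).1 (hbij.mapsTo hv.1).2
  rw [LinearMap.det_toContinuousLinearMap, LinearMap.det_toLin', det_triangularJacobian,
    ← ENNReal.ofReal_mul (abs_nonneg _), abs_mul a, mul_assoc,
    mul_inv_cancel₀ (abs_ne_zero.2 hne), mul_one]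

end TriangularSubstitution

/-- The conditions of `RSet' B` on the first five coordinates alone. -/
def baseRegion (B : ℝ) : Set (Fin 5 → ℝ) :=
  {u | (∀ i, 1 ≤ u i) ∧
    u 0 ^ 2 * u 1 ^ 2 * u 2 ^ 3 * u 3 ^ 2 ≤ B ∧
    B ≤ u 0 ^ 3 * u 1 ^ 3 * u 2 ^ 4 * u 3 ^ 2 * (u 4 ^ 2)⁻¹}

/-- The conditions of `RSet' B` on the last three coordinates, the first five being fixed to `u`. -/
def heightFibre (B : ℝ) (u : Fin 5 → ℝ) : Set (Fin 3 → ℝ) :=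
  {v | 0 ≤ v 0 ∧ hFun (Fin.append u v) B ≤ 1}

/-- The coordinates `(x₀, x₁, x₂)` of the archimedean density as functions of
`v = (η₆, η₇, η₈)`, for fixed `u = (η₁, …, η₅)`. -/
noncomputable def densityCoords (B : ℝ) (u : Fin 5 → ℝ) : (Fin 3 → ℝ) → Fin 3 → ℝ :=
  triangularMap (u 1 * u 2 * u 3 * u 4 / B) (u 0 ^ 2 * u 1 ^ 2 * u 2 ^ 3 * u 3 ^ 2 / B)
    (u 0 * u 1 * u 2 ^ 2 * u 3 ^ 2 * u 4 ^ 2 / B)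

lemma measurableSet_Pprime : MeasurableSet Pprime := by
  unfold Pprime
  measurability

lemma measurableSet_omegaSet : MeasurableSet omegaSet := by
  unfold omegaSet
  measurability

lemma measurableSet_baseRegion (B : ℝ) : MeasurableSet (baseRegion B) := by
  unfold baseRegion
  measurability

lemma measurableSet_RSet' (B : ℝ) : MeasurableSet (RSet' B) := by
  have hmeas : Measurable fun η : Fin 8 → ℝ => hFun η B := by
    unfold hFun
    fun_prop
  unfold RSet'
  measurability

section Fibration

variable {B : ℝ} {u : Fin 5 → ℝ}

lemma append_mem_RSet'_iff {v : Fin 3 → ℝ} :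
    Fin.append u v ∈ RSet' B ↔ u ∈ baseRegion B ∧ v ∈ heightFibre B u := by
  have hone : (∀ i : Fin 8, i.val ≤ 4 → 1 ≤ (Fin.append u v : Fin 8 → ℝ) i) ↔ ∀ i, 1 ≤ u i := by
    refine (Fin.forall_fin_add (m := 5) (n := 3) _).trans ?_
    simp only [Fin.append_left, Fin.append_right, Fin.val_castAdd, Fin.val_natAdd]
    exact ⟨fun h i => h.1 i (by omega), fun h => ⟨fun i _ => h i, fun i hi => by omega⟩⟩
  unfold RSet' baseRegion heightFibre
  simp only [Set.mem_ofPred_eq, and_assoc]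
  rw [hone]
  rfl

lemma densityCoords_coeffs_pos (hB : 0 < B) (hu : ∀ i, 0 < u i) :
    0 < u 1 * u 2 * u 3 * u 4 / B ∧ 0 < u 0 ^ 2 * u 1 ^ 2 * u 2 ^ 3 * u 3 ^ 2 / B ∧
      0 < u 0 * u 1 * u 2 ^ 2 * u 3 ^ 2 * u 4 ^ 2 / B := by
  have := hu 0
  have := hu 1
  have := hu 2
  have := hu 3
  have := hu 4
  refine ⟨?_, ?_, ?_⟩ <;> positivity

lemma densityCoords_one_pos (hB : 0 < B) (hu : ∀ i, 0 < u i) {v : Fin 3 → ℝ} (hp : 0 < v 0) :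
    0 < densityCoords B u v 1 :=
  mul_pos (densityCoords_coeffs_pos hB hu).2.1 hp

lemma densityCoords_two_ne_zero (hB : 0 < B) (hu : ∀ i, 0 < u i) {v : Fin 3 → ℝ} (hp : v 0 ≠ 0)
    (hq : v 1 ≠ 0) : densityCoords B u v 2 ≠ 0 :=
  mul_ne_zero (mul_ne_zero (densityCoords_coeffs_pos hB hu).2.2.ne' (pow_ne_zero 2 hp)) hq

lemma hFun_append_eq_max (hB : 0 < B) (hu : ∀ i, 0 < u i) {v x : Fin 3 → ℝ}
    (hx : densityCoords B u v = x) (hp : 0 < v 0) (hq : v 1 ≠ 0) :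
    hFun (Fin.append u v) B =
      max |x 0| (max (x 1) (max |x 2| (max (x 2 ^ 2 / x 1)
        (|x 0 ^ 2 * x 1 + x 0 * x 2 ^ 2| / (x 1 * |x 2|))))) := by
  have inv_mul_abs (y : ℝ) : B⁻¹ * |y| = |y / B| := by rw [abs_div, abs_of_pos hB, inv_mul_eq_div]
  have hx1_pos : 0 < x 1 := hx ▸ densityCoords_one_pos hB hu hp
  have hdenom : x 1 * |x 2| = |x 1 * x 2| := by rw [abs_mul, abs_of_pos hx1_pos]
  have hx0 : x 0 = u 1 * u 2 * u 3 * u 4 / B * v 0 * v 1 * v 2 := by rw [← hx]; rfl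
  have hx1 : x 1 = u 0 ^ 2 * u 1 ^ 2 * u 2 ^ 3 * u 3 ^ 2 / B * v 0 := by rw [← hx]; rfl
  have hx2 : x 2 = u 0 * u 1 * u 2 ^ 2 * u 3 ^ 2 * u 4 ^ 2 / B * v 0 ^ 2 * v 1 := by rw [← hx]; rfl
  have hu_ne := fun i => (hu i).ne'
  rw [hdenom, ← abs_div, hx0, hx1, hx2]
  simp only [hFun, mul_max_of_nonneg _ _ (inv_nonneg.2 hB.le), inv_mul_abs]
  change max |u 1 * u 2 * u 3 * u 4 * v 0 * v 1 * v 2 / B|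
    (max (B⁻¹ * (u 0 ^ 2 * u 1 ^ 2 * u 2 ^ 3 * u 3 ^ 2 * v 0))
      (max |u 0 * u 1 * u 2 ^ 2 * u 3 ^ 2 * u 4 ^ 2 * v 0 ^ 2 * v 1 / B|
        (max (B⁻¹ * (u 2 * u 3 ^ 2 * u 4 ^ 4 * v 0 ^ 3 * v 1 ^ 2))
          |(u 0)⁻¹ * (u 1 * v 1 * v 2 ^ 2 + u 3 * u 4 ^ 3 * v 0 ^ 2 * v 1 ^ 2 * v 2) / B|))) = _
  refine congrArg₂ max (congrArg abs ?_) (congrArg₂ max ?_ (congrArg₂ max (congrArg abs ?_)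
    (congrArg₂ max ?_ (congrArg abs ?_))))
  all_goals field_simp [hu_ne 0, hu_ne 1, hu_ne 2, hu_ne 3, hu_ne 4]

lemma hFun_append_le_one_iff (hB : 0 < B) (hu : ∀ i, 0 < u i) {v : Fin 3 → ℝ} (hp : 0 < v 0)
    (hq : v 1 ≠ 0) :
    hFun (Fin.append u v) B ≤ 1 ↔ densityCoords B u v ∈ omegaSet := by
  have hx1 := densityCoords_one_pos hB hu hp
  have hx2 := densityCoords_two_ne_zero hB hu hp.ne' hq
  rw [hFun_append_eq_max hB hu rfl hp hq]
  simp only [max_le_iff, div_le_one hx1, div_le_one (mul_pos hx1 (abs_pos.2 hx2)), omegaSet,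
    Set.mem_ofPred_eq, hx1.le, true_and]
  tauto

lemma heightFibre_ae_eq_preimage_omegaSet (hB : 0 < B) (hu : ∀ i, 0 < u i) :
    heightFibre B u =ᵐ[volume] densityCoords B u ⁻¹' omegaSet := by
  filter_upwards [ae_apply_ne_zero_and_apply_ne_zero 0 1] with v ⟨hp, hq⟩
  refine propext ?_
  change 0 ≤ v 0 ∧ hFun (Fin.append u v) B ≤ 1 ↔ densityCoords B u v ∈ omegaSet
  rcases hp.lt_or_gt with hp | hp
  · have hx1 : densityCoords B u v 1 < 0 :=
      mul_neg_of_pos_of_neg (densityCoords_coeffs_pos hB hu).2.1 hp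
    exact iff_of_false (fun h => hp.not_ge h.1) fun h => hx1.not_ge h.1
  · rw [hFun_append_le_one_iff hB hu hp hq, and_iff_right hp.le]

lemma volume_heightFibre (hB : 0 < B) (hu : ∀ i, 0 < u i) :
    volume (heightFibre B u) = ENNReal.ofReal (u 1 * u 2 * u 3 * u 4 / B)⁻¹ *
      ∫⁻ x in omegaSet, ENNReal.ofReal (x 1 * |x 2|)⁻¹ := by
  obtain ⟨ha, hb, hc⟩ := densityCoords_coeffs_pos hB hu
  have hω : ∫⁻ x in omegaSet, ENNReal.ofReal (x 1 * |x 2|)⁻¹ =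
      ENNReal.ofReal (u 1 * u 2 * u 3 * u 4 / B) * volume (heightFibre B u) := by
    have hsubst := setLIntegral_inv_abs_eq_volume_triangularMap_preimage ha.ne' hb.ne' hc.ne'
      measurableSet_omegaSet
    rw [abs_of_pos ha] at hsubst
    rw [measure_congr (heightFibre_ae_eq_preimage_omegaSet hB hu), densityCoords, ← hsubst]
    exact setLIntegral_congr_fun measurableSet_omegaSet fun x hx => by
      rw [abs_mul, abs_of_nonneg hx.1]
  rw [hω, ← mul_assoc, ← ENNReal.ofReal_mul (inv_pos.2 ha).le, inv_mul_cancel₀ ha.ne',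
    ENNReal.ofReal_one, one_mul]

lemma setLIntegral_RSet'_eq_baseRegion (hB : 0 < B) :
    ∫⁻ η in RSet' B, ENNReal.ofReal (η 0)⁻¹ =
      (∫⁻ u in baseRegion B, ENNReal.ofReal (∏ i, u i)⁻¹) *
        (ENNReal.ofReal B * ∫⁻ x in omegaSet, ENNReal.ofReal (x 1 * |x 2|)⁻¹) := by
  calc ∫⁻ η in RSet' B, ENNReal.ofReal (η 0)⁻¹
    _ = ∫⁻ u : Fin 5 → ℝ,
        ENNReal.ofReal (u 0)⁻¹ * volume {v : Fin 3 → ℝ | Fin.append u v ∈ RSet' B} :=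
      setLIntegral_comp_castAdd (m := 5) (n := 3) (measurableSet_RSet' B)
        (f := fun u => ENNReal.ofReal (u 0)⁻¹) (by fun_prop)
    _ = ∫⁻ u in baseRegion B, ENNReal.ofReal (u 0)⁻¹ * volume (heightFibre B u) := by
      rw [← lintegral_indicator (measurableSet_baseRegion B)]
      refine lintegral_congr fun u => ?_
      by_cases hu : u ∈ baseRegion B <;> simp [append_mem_RSet'_iff, hu]
    _ = ∫⁻ u in baseRegion B, ENNReal.ofReal (∏ i, u i)⁻¹ *
        (ENNReal.ofReal B * ∫⁻ x in omegaSet, ENNReal.ofReal (x 1 * |x 2|)⁻¹) := by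
      refine setLIntegral_congr_fun (measurableSet_baseRegion B) fun u hu => ?_
      have hpos : ∀ i, 0 < u i := fun i => zero_lt_one.trans_le (hu.1 i)
      have hsplit : (∏ i, u i)⁻¹ * B = (u 0)⁻¹ * (u 1 * u 2 * u 3 * u 4 / B)⁻¹ := by
        rw [Fin.prod_univ_five, inv_div]
        field_simp
      rw [volume_heightFibre hB hpos, ← mul_assoc, ← mul_assoc,
        ← ENNReal.ofReal_mul (inv_pos.2 (hpos 0)).le,
        ← ENNReal.ofReal_mul (inv_pos.2 (Finset.prod_pos fun i _ => hpos i)).le, hsplit]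
    _ = _ := lintegral_mul_const _ (by fun_prop)

lemma exp_mem_baseRegion_iff {L : ℝ} (hL : 0 < L) (t : Fin 5 → ℝ) :
    (fun i => Real.exp (L * t i)) ∈ baseRegion (Real.exp L) ↔ t ∈ Pprime := by
  have hupper : L * (2 * t 0 + 2 * t 1 + 3 * t 2 + 2 * t 3) ≤ L ↔
      2 * t 0 + 2 * t 1 + 3 * t 2 + 2 * t 3 ≤ 1 := mul_le_iff_le_one_right hL
  have hlower : L ≤ L * (3 * t 0 + 3 * t 1 + 4 * t 2 + 2 * t 3 - 2 * t 4) ↔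
      1 ≤ 3 * t 0 + 3 * t 1 + 4 * t 2 + 2 * t 3 - 2 * t 4 := le_mul_iff_one_le_right hL
  simp only [baseRegion, Pprime, Set.mem_ofPred_eq, ← Real.exp_nat_mul, ← Real.exp_add,
    ← Real.exp_neg, Real.exp_le_exp, Real.one_le_exp_iff, mul_nonneg_iff_of_pos_left hL,
    ← hupper, ← hlower]
  push_cast
  ring_nf

lemma setLIntegral_baseRegion_inv_prod (hB : 1 < B) :
    ∫⁻ u in baseRegion B, ENNReal.ofReal (∏ i, u i)⁻¹ =
      ENNReal.ofReal (Real.log B) ^ 5 * volume Pprime := by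
  have hlog := Real.log_pos hB
  have hpre : {t : Fin 5 → ℝ | (fun i => Real.exp (Real.log B * t i)) ∈ baseRegion B} = Pprime := by
    ext t
    have h := exp_mem_baseRegion_iff hlog t
    rwa [Real.exp_log (zero_lt_one.trans hB)] at h
  rw [setLIntegral_inv_prod_eq_volume_exp_preimage hlog.ne' (measurableSet_baseRegion B)
    (fun u hu i => zero_lt_one.trans_le (hu.1 i)), hpre, abs_of_pos hlog, Fintype.card_fin]

end Fibration

lemma V0'_eq_toReal_lintegral (B : ℝ) :
    V0' B = (∫⁻ η in RSet' B, ENNReal.ofReal (η 0)⁻¹).toReal :=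
  integral_eq_lintegral_of_nonneg_ae
    (ae_restrict_of_forall_mem (measurableSet_RSet' B) fun η hη =>
      inv_nonneg.2 (zero_le_one.trans (hη.1 0 (by simp))))
    (Measurable.aestronglyMeasurable (by fun_prop))

lemma omegaInf_eq_toReal_lintegral :
    omegaInf = (∫⁻ x in omegaSet, ENNReal.ofReal (x 1 * |x 2|)⁻¹).toReal :=
  integral_eq_lintegral_of_nonneg_ae
    (ae_restrict_of_forall_mem measurableSet_omegaSet fun x hx =>
      inv_nonneg.2 (mul_nonneg hx.1 (abs_nonneg _)))
    (Measurable.aestronglyMeasurable (by fun_prop))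

theorem V0'_eq_general (B : ℝ) (hB : 1 < B) :
    V0' B = (volume Pprime).toReal * omegaInf * B * Real.log B ^ 5 := by
  have hB_pos : 0 < B := zero_lt_one.trans hB
  rw [V0'_eq_toReal_lintegral, omegaInf_eq_toReal_lintegral,
    setLIntegral_RSet'_eq_baseRegion hB_pos, setLIntegral_baseRegion_inv_prod hB]
  simp only [ENNReal.toReal_mul, ENNReal.toReal_pow, ENNReal.toReal_ofReal hB_pos.le,
    ENNReal.toReal_ofReal (Real.log_pos hB).le]
  ring

/-- The exact evaluation `V₀'(B) = vol(P') · ω_∞ · B (log B)⁵`. -/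
theorem V0'_eq : ∀ B : ℝ, 3 ≤ B →
    V0' B = (volume Pprime).toReal * omegaInf * B * Real.log B ^ 5 :=
  fun B hB => V0'_eq_general B (by linarith)
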